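/- Let ABC be a triangle with circumcenter O and orthocenter H, and assume H ∉ {A, B, C}. Let A*, B*, C* be the pedals of O on lines AH, BH, CH, and assume A*, B*, C* are affinely independent with orthocenter H*. Let D be the reflection of H* in line B*C*. Then A, O and D are collinear. -/

import Mathlib

open EuclideanGeometry

noncomputable section

/-- The Euclidean plane. -/
abbrev Pt := EuclideanSpace ℝ (Fin 2)

/-- The pedal (orthogonal projection) of `P` on the line `XY` (the affine span of `{X, Y}`). -/
def pedal (P X Y : Pt) : Pt :=
  EuclideanGeometry.orthogonalProjection (affineSpan ℝ {X, Y}) P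

/-- The reflection of `P` in the line `XY` (the affine span of `{X, Y}`). -/
def lineReflect (X Y P : Pt) : Pt :=
  EuclideanGeometry.reflection (affineSpan ℝ {X, Y}) P

/-- The circumcenter of the triangle `ABC`. -/
def circumcenter3 (A B C : Pt) (h : AffineIndependent ℝ ![A, B, C]) : Pt :=
  (⟨![A, B, C], h⟩ : Affine.Triangle ℝ Pt).circumcenter

/-- The circumradius of the triangle `ABC`. -/
def circumradius3 (A B C : Pt) (h : AffineIndependent ℝ ![A, B, C]) : ℝ :=
  (⟨![A, B, C], h⟩ : Affine.Triangle ℝ Pt).circumradius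

/-- The orthocenter of the triangle `ABC`. -/
def orthocenter3 (A B C : Pt) (h : AffineIndependent ℝ ![A, B, C]) : Pt :=
  Affine.Triangle.orthocenter (⟨![A, B, C], h⟩ : Affine.Triangle ℝ Pt)

/-- The incenter of the triangle `ABC`: `(a•A + b•B + c•C)/(a+b+c)` with
`a = dist B C`, `b = dist C A`, `c = dist A B`. -/
def incenter3 (A B C : Pt) : Pt :=
  (dist B C + dist C A + dist A B)⁻¹ •
    (dist B C • A + dist C A • B + dist A B • C)

/-- The centroid of the triangle `ABC`. -/
def centroid3 (A B C : Pt) : Pt := (3 : ℝ)⁻¹ • (A + B + C)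

/-- The Nagel point of the triangle `ABC`:
`((s−a)/s)•A + ((s−b)/s)•B + ((s−c)/s)•C` with `s` the semiperimeter. -/
def nagelPoint (A B C : Pt) : Pt :=
  (((dist B C + dist C A + dist A B) / 2 - dist B C) /
      ((dist B C + dist C A + dist A B) / 2)) • A +
    (((dist B C + dist C A + dist A B) / 2 - dist C A) /
      ((dist B C + dist C A + dist A B) / 2)) • B +
    (((dist B C + dist C A + dist A B) / 2 - dist A B) /
      ((dist B C + dist C A + dist A B) / 2)) • C


lemma pedal_spec (P X Y : Pt) : ∃ t : ℝ,
    (∀ i, pedal P X Y i = X i + t * (Y i - X i)) ∧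
    (P 0 - pedal P X Y 0) * (Y 0 - X 0) + (P 1 - pedal P X Y 1) * (Y 1 - X 1) = 0 := by
  have h1 : pedal P X Y ∈ affineSpan ℝ {X, Y} := orthogonalProjection_mem P
  have h2 : P -ᵥ pedal P X Y ∈ (affineSpan ℝ {X, Y}).directionᗮ :=
    vsub_orthogonalProjection_mem_direction_orthogonal _ P
  obtain ⟨t, ht⟩ := mem_affineSpan_pair_iff_exists_lineMap_eq.1 h1
  refine ⟨t, fun i => ?_, ?_⟩
  · rw [← ht]
    simp [AffineMap.lineMap_apply]
    ring
  · have h3 : Y -ᵥ X ∈ (affineSpan ℝ {X, Y}).direction :=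
      AffineSubspace.vsub_mem_direction (right_mem_affineSpan_pair ℝ X Y)
        (left_mem_affineSpan_pair ℝ X Y)
    have h4 := Submodule.inner_right_of_mem_orthogonal h3 h2
    simp [PiLp.inner_apply, Fin.sum_univ_two] at h4
    linarith

lemma reflect_spec (X Y P : Pt) (i : Fin 2) :
    lineReflect X Y P i = 2 * pedal P X Y i - P i := by
  unfold lineReflect pedal
  rw [reflection_apply']
  simp
  ring

lemma cross_ne (A B C : Pt) (h : AffineIndependent ℝ ![A, B, C]) :
    (B 0 - A 0) * (C 1 - A 1) - (B 1 - A 1) * (C 0 - A 0) ≠ 0 := by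
  intro h0
  rw [affineIndependent_iff_not_collinear_set] at h
  apply h
  by_cases hB : B = A
  · subst hB
    simpa using collinear_pair ℝ B C
  · have hn : (B 0 - A 0) ^ 2 + (B 1 - A 1) ^ 2 ≠ 0 := by
      intro hz
      apply hB
      ext i
      fin_cases i
      · simp; nlinarith [sq_nonneg (B 0 - A 0), sq_nonneg (B 1 - A 1)]
      · simp; nlinarith [sq_nonneg (B 0 - A 0), sq_nonneg (B 1 - A 1)]
    rw [collinear_iff_of_mem (p₀ := A) (by simp)]
    refine ⟨B - A, ?_⟩
    intro p hp
    simp only [Set.mem_insert_iff, Set.mem_singleton_iff] at hp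
    rcases hp with rfl | rfl | rfl
    · exact ⟨0, by simp⟩
    · exact ⟨1, by simp⟩
    · refine ⟨((B 0 - A 0) * (p 0 - A 0) + (B 1 - A 1) * (p 1 - A 1)) /
        ((B 0 - A 0) ^ 2 + (B 1 - A 1) ^ 2), ?_⟩
      ext i
      fin_cases i
      · simp; field_simp; linear_combination (-(B 1 - A 1)) * h0
      · simp; field_simp; linear_combination ((B 0 - A 0)) * h0

lemma circ_spec (A B C : Pt) (h : AffineIndependent ℝ ![A, B, C]) :
    ∃ r : ℝ, ∀ P ∈ ({A, B, C} : Set Pt),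
      (P 0 - circumcenter3 A B C h 0) ^ 2 + (P 1 - circumcenter3 A B C h 1) ^ 2 = r := by
  set t : Affine.Triangle ℝ Pt := ⟨![A, B, C], h⟩ with ht
  refine ⟨t.circumradius ^ 2, ?_⟩
  have key : ∀ i, (t.points i 0 - circumcenter3 A B C h 0) ^ 2 +
      (t.points i 1 - circumcenter3 A B C h 1) ^ 2 = t.circumradius ^ 2 := by
    intro i
    rw [← t.dist_circumcenter_eq_circumradius i, EuclideanSpace.dist_eq,
      Real.sq_sqrt (by positivity)]
    simp [Fin.sum_univ_two, Real.dist_eq, circumcenter3, ht]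
  intro P hP
  simp only [Set.mem_insert_iff, Set.mem_singleton_iff] at hP
  rcases hP with rfl | rfl | rfl
  · exact key 0
  · exact key 1
  · exact key 2

lemma orth_spec (A B C : Pt) (h : AffineIndependent ℝ ![A, B, C]) (i : Fin 2) :
    orthocenter3 A B C h i = A i + B i + C i - 2 * circumcenter3 A B C h i := by
  have := Affine.Triangle.orthocenter_vsub_circumcenter_eq_sum_vsub
    (⟨![A, B, C], h⟩ : Affine.Triangle ℝ Pt)
  have := congrArg (fun v : Pt => v i) this
  simp [Fin.sum_univ_three] at this
  unfold orthocenter3 circumcenter3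
  linarith

lemma perp_zero {u1 u2 p1 p2 q1 q2 : ℝ} (h1 : u1 * p1 + u2 * p2 = 0)
    (h2 : u1 * q1 + u2 * q2 = 0) (h : p1 * q2 - p2 * q1 ≠ 0) : u1 = 0 ∧ u2 = 0 := by
  constructor
  · apply (mul_eq_zero.1 (?_ : (p1 * q2 - p2 * q1) * u1 = 0)).resolve_left h
    linear_combination q2 * h1 - p2 * h2
  · apply (mul_eq_zero.1 (?_ : (p1 * q2 - p2 * q1) * u2 = 0)).resolve_left h
    linear_combination p1 * h2 - q1 * h1

lemma dotcross_zero {u1 u2 p1 p2 : ℝ} (h1 : u1 * p1 + u2 * p2 = 0)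
    (h2 : u1 * p2 - u2 * p1 = 0) (h : ¬ (p1 = 0 ∧ p2 = 0)) : u1 = 0 ∧ u2 = 0 := by
  apply perp_zero (p1 := p1) (p2 := p2) (q1 := p2) (q2 := -p1) h1 (by linarith)
  intro h0
  apply h
  constructor <;> nlinarith [sq_nonneg p1, sq_nonneg p2]

/-- Position of the pedal, relative to the midpoint of `OH`, as `K * conj a`. -/
lemma pedal_alg {a1 a2 b1 b2 c1 c2 r p1 p2 t : ℝ} (hr : r ≠ 0)
    (ha : a1 ^ 2 + a2 ^ 2 = r) (hb : b1 ^ 2 + b2 ^ 2 = r) (hc : c1 ^ 2 + c2 ^ 2 = r)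
    (hp1 : p1 = a1 + t * (b1 + c1)) (hp2 : p2 = a2 + t * (b2 + c2))
    (hp : p1 * (b1 + c1) + p2 * (b2 + c2) = 0) (hn : ¬ (b1 + c1 = 0 ∧ b2 + c2 = 0)) 
    {k1 k2 : ℝ}
    (hk1 : 2 * r * k1 = -((a1*b1-a2*b2) + (b1*c1-b2*c2) + (c1*a1-c2*a2)))
    (hk2 : 2 * r * k2 = -((a1*b2+a2*b1) + (b1*c2+b2*c1) + (c1*a2+c2*a1))) :
    p1 = (a1+b1+c1)/2 + (k1*a1+k2*a2) ∧ p2 = (a2+b2+c2)/2 + (k2*a1-k1*a2) := by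
  have key := dotcross_zero
    (u1 := 2 * r * (p1 - ((a1+b1+c1)/2 + (k1*a1+k2*a2))))
    (u2 := 2 * r * (p2 - ((a2+b2+c2)/2 + (k2*a1-k1*a2)))) (p1 := b1 + c1) (p2 := b2 + c2)
    ?_ ?_ hn
  · constructor
    · have := (mul_eq_zero.1 key.1).resolve_left (by simpa using hr)
      linarith
    · have := (mul_eq_zero.1 key.2).resolve_left (by simpa using hr)
      linarith
  · have e1 : 2 * r * (p1 - ((a1+b1+c1)/2 + (k1*a1+k2*a2))) =
      2 * r * p1 - r * (a1+b1+c1) - ((2*r*k1)*a1+(2*r*k2)*a2) := by ring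
    have e2 : 2 * r * (p2 - ((a2+b2+c2)/2 + (k2*a1-k1*a2))) =
      2 * r * p2 - r * (a2+b2+c2) - ((2*r*k2)*a1-(2*r*k1)*a2) := by ring
    rw [e1, e2, hk1, hk2]
    clear e1 e2 hk1 hk2 hn hp1 hp2 
    grind
  · have e1 : 2 * r * (p1 - ((a1+b1+c1)/2 + (k1*a1+k2*a2))) =
      2 * r * p1 - r * (a1+b1+c1) - ((2*r*k1)*a1+(2*r*k2)*a2) := by ring
    have e2 : 2 * r * (p2 - ((a2+b2+c2)/2 + (k2*a1-k1*a2))) =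
      2 * r * p2 - r * (a2+b2+c2) - ((2*r*k2)*a1-(2*r*k1)*a2) := by ring
    rw [e1, e2, hk1, hk2, hp1, hp2]
    clear e1 e2 hk1 hk2 hn hp hp1 hp2 
    grind

lemma refl_alg {a1 a2 b1 b2 c1 c2 r k1 k2 d1 d2 s : ℝ} (hr : r ≠ 0)
    (ha : a1 ^ 2 + a2 ^ 2 = r) (hb : b1 ^ 2 + b2 ^ 2 = r) (hc : c1 ^ 2 + c2 ^ 2 = r)
    {A1 A2 B1 B2 C1 C2 : ℝ}
    (hA1 : A1 = k1*a1+k2*a2) (hA2 : A2 = k2*a1-k1*a2)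
    (hB1 : B1 = k1*b1+k2*b2) (hB2 : B2 = k2*b1-k1*b2)
    (hC1 : C1 = k1*c1+k2*c2) (hC2 : C2 = k2*c1-k1*c2)
    (hn : ¬ (C1 - B1 = 0 ∧ C2 - B2 = 0))
    (hd1 : d1 + (A1 + B1 + C1) = 2 * (B1 + s * (C1 - B1)))
    (hd2 : d2 + (A2 + B2 + C2) = 2 * (B2 + s * (C2 - B2)))
    (hd : (d1 - (A1 + B1 + C1)) * (C1 - B1) + (d2 - (A2 + B2 + C2)) * (C2 - B2) = 0)
    {e1 e2 : ℝ} 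
    (he1 : e1 = a1 * (b1*c1-b2*c2) + a2 * (b1*c2+b2*c1))
    (he2 : e2 = a2 * (b1*c1-b2*c2) - a1 * (b1*c2+b2*c1)) :
    r * d1 = -(k1 * e1 - k2 * e2) ∧ r * d2 = -(k1 * e2 + k2 * e1) := by
  have key := dotcross_zero (u1 := r * d1 + (k1 * e1 - k2 * e2))
    (u2 := r * d2 + (k1 * e2 + k2 * e1)) (p1 := C1 - B1) (p2 := C2 - B2) ?_ ?_ hn
  · constructor <;> linarith [key.1, key.2]
  · have : (r * d1 + (k1 * e1 - k2 * e2)) * (C1 - B1) + (r * d2 + (k1 * e2 + k2 * e1)) * (C2 - B2)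
      = (r * (A1 + B1 + C1) + (k1 * e1 - k2 * e2)) * (C1 - B1)
        + (r * (A2 + B2 + C2) + (k1 * e2 + k2 * e1)) * (C2 - B2) := by
      linear_combination r * hd
    rw [this]
    clear this hd hd1 hd2 hn
    subst hA1 hA2 hB1 hB2 hC1 hC2 he1 he2
    grind
  · have : (r * d1 + (k1 * e1 - k2 * e2)) * (C2 - B2) - (r * d2 + (k1 * e2 + k2 * e1)) * (C1 - B1)
      = (-r * A1 + (k1 * e1 - k2 * e2)) * (C2 - B2)
        - (-r * A2 + (k1 * e2 + k2 * e1)) * (C1 - B1) := by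
      linear_combination r * (C2 - B2) * hd1 - r * (C1 - B1) * hd2
    rw [this]
    clear this hd hd1 hd2 hn
    subst hA1 hA2 hB1 hB2 hC1 hC2 he1 he2
    grind

lemma final_alg {a1 a2 b1 b2 c1 c2 r k1 k2 d1 d2 : ℝ} (hr : r ≠ 0)
    (ha : a1 ^ 2 + a2 ^ 2 = r) (hb : b1 ^ 2 + b2 ^ 2 = r) (hc : c1 ^ 2 + c2 ^ 2 = r)
    (hk1 : 2 * r * k1 = -((a1*b1-a2*b2) + (b1*c1-b2*c2) + (c1*a1-c2*a2)))
    (hk2 : 2 * r * k2 = -((a1*b2+a2*b1) + (b1*c2+b2*c1) + (c1*a2+c2*a1)))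
    {e1 e2 : ℝ} 
    (he1 : e1 = a1 * (b1*c1-b2*c2) + a2 * (b1*c2+b2*c1))
    (he2 : e2 = a2 * (b1*c1-b2*c2) - a1 * (b1*c2+b2*c1))
    (hd1 : r * d1 = -(k1 * e1 - k2 * e2)) (hd2 : r * d2 = -(k1 * e2 + k2 * e1)) :
    a1 * ((a2+b2+c2)/2 + d2) - a2 * ((a1+b1+c1)/2 + d1) = 0 := by
  apply (mul_eq_zero.1 (?_ : (2 * r ^ 2) * _ = 0)).resolve_left (by positivity)
  have : (2 * r ^ 2) * (a1 * ((a2+b2+c2)/2 + d2) - a2 * ((a1+b1+c1)/2 + d1)) =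
     r ^ 2 * (a1 * (b2+c2) - a2 * (b1+c1)) - a1 * ((2*r*k1) * e2 + (2*r*k2) * e1)
       + a2 * ((2*r*k1) * e1 - (2*r*k2) * e2) := by
    linear_combination 2 * r * a1 * hd2 - 2 * r * a2 * hd1
  rw [this, hk1, hk2]
  clear this hd1 hd2 hk1 hk2
  subst he1 he2
  grind

set_option maxHeartbeats 2000000 in
theorem stmt9 (A B C O H As Bs Cs Hs D : Pt)
    (hABC : AffineIndependent ℝ ![A, B, C])
    (hO : O = circumcenter3 A B C hABC)
    (hH : H = orthocenter3 A B C hABC)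
    (hHA : H ≠ A) (hHB : H ≠ B) (hHC : H ≠ C)
    (hAs : As = pedal O A H) (hBs : Bs = pedal O B H) (hCs : Cs = pedal O C H)
    (hind : AffineIndependent ℝ ![As, Bs, Cs])
    (hHs : Hs = orthocenter3 As Bs Cs hind)
    (hD : D = lineReflect Bs Cs Hs) :
    Collinear ℝ ({A, O, D} : Set Pt) := by
  have hne := cross_ne A B C hABC
  have hne' := cross_ne As Bs Cs hind
  have hHi : ∀ i, H i = A i + B i + C i - 2 * O i := by
    intro i; rw [hH, hO]; exact orth_spec A B C hABC i
  obtain ⟨r, hrr⟩ := circ_spec A B C hABC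
  rw [← hO] at hrr
  have ha := hrr A (by simp)
  have hb := hrr B (by simp)
  have hc := hrr C (by simp)
  have hr : r ≠ 0 := by
    rintro rfl
    apply hne
    have h1 : A 0 - O 0 = 0 := by nlinarith [sq_nonneg (A 0 - O 0), sq_nonneg (A 1 - O 1)]
    have h2 : A 1 - O 1 = 0 := by nlinarith [sq_nonneg (A 0 - O 0), sq_nonneg (A 1 - O 1)]
    have h3 : B 0 - O 0 = 0 := by nlinarith [sq_nonneg (B 0 - O 0), sq_nonneg (B 1 - O 1)]
    have h4 : B 1 - O 1 = 0 := by nlinarith [sq_nonneg (B 0 - O 0), sq_nonneg (B 1 - O 1)]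
    rw [show B 0 - A 0 = 0 by linarith, show B 1 - A 1 = 0 by linarith]
    ring
  have hext : ∀ X Y : Pt, X ≠ Y → ¬ (X 0 = Y 0 ∧ X 1 = Y 1) := by
    intro X Y hXY h
    apply hXY
    ext i
    fin_cases i
    · exact h.1
    · exact h.2
  -- pedals
  set a1 := A 0 - O 0 with ha1
  set a2 := A 1 - O 1 with ha2
  set b1 := B 0 - O 0 with hb1
  set b2 := B 1 - O 1 with hb2
  set c1 := C 0 - O 0 with hc1
  set c2 := C 1 - O 1 with hc2
  obtain ⟨k1, hk1⟩ : ∃ k1 : ℝ,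
      2 * r * k1 = -((a1*b1-a2*b2) + (b1*c1-b2*c2) + (c1*a1-c2*a2)) :=
    ⟨(-((a1*b1-a2*b2) + (b1*c1-b2*c2) + (c1*a1-c2*a2))) / (2 * r), by field_simp⟩
  obtain ⟨k2, hk2⟩ : ∃ k2 : ℝ,
      2 * r * k2 = -((a1*b2+a2*b1) + (b1*c2+b2*c1) + (c1*a2+c2*a1)) :=
    ⟨(-((a1*b2+a2*b1) + (b1*c2+b2*c1) + (c1*a2+c2*a1))) / (2 * r), by field_simp⟩
  have H0 := hHi 0
  have H1 := hHi 1
  obtain ⟨tA, hA, hA'⟩ := pedal_spec O A H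
  obtain ⟨tB, hB, hB'⟩ := pedal_spec O B H
  obtain ⟨tC, hC, hC'⟩ := pedal_spec O C H
  rw [← hAs] at hA hA'
  rw [← hBs] at hB hB'
  rw [← hCs] at hC hC'
  have hA0 := hA 0
  have hA1 := hA 1
  have hB0 := hB 0
  have hB1 := hB 1
  have hC0 := hC 0
  have hC1 := hC 1
  have eA0 : H 0 - A 0 = b1 + c1 := by linarith
  have eA1 : H 1 - A 1 = b2 + c2 := by linarith
  have eB0 : H 0 - B 0 = c1 + a1 := by linarith
  have eB1 : H 1 - B 1 = c2 + a2 := by linarith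
  have eC0 : H 0 - C 0 = a1 + b1 := by linarith
  have eC1 : H 1 - C 1 = a2 + b2 := by linarith
  rw [eA0] at hA0 hA'
  rw [eA1] at hA1 hA'
  rw [eB0] at hB0 hB'
  rw [eB1] at hB1 hB'
  rw [eC0] at hC0 hC'
  rw [eC1] at hC1 hC'
  obtain ⟨pA0, pA1⟩ := pedal_alg (p1 := As 0 - O 0) (p2 := As 1 - O 1) (t := tA) hr ha hb hc
    (by linarith) (by linarith) (by linarith)
    (fun h => hext _ _ hHA ⟨by linarith [h.1], by linarith [h.2]⟩) hk1 hk2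
  obtain ⟨pB0, pB1⟩ := pedal_alg (p1 := Bs 0 - O 0) (p2 := Bs 1 - O 1) (t := tB) hr hb hc ha
    (by linarith) (by linarith) (by linarith)
    (fun h => hext _ _ hHB ⟨by linarith [h.1], by linarith [h.2]⟩)
    (k1 := k1) (k2 := k2) (by linarith) (by linarith)
  obtain ⟨pC0, pC1⟩ := pedal_alg (p1 := Cs 0 - O 0) (p2 := Cs 1 - O 1) (t := tC) hr hc ha hb
    (by linarith) (by linarith) (by linarith)
    (fun h => hext _ _ hHC ⟨by linarith [h.1], by linarith [h.2]⟩)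
    (k1 := k1) (k2 := k2) (by linarith) (by linarith)
  -- the circumcenter of the pedal triangle
  obtain ⟨ρ, hρ⟩ := circ_spec As Bs Cs hind
  have hHsi := orth_spec As Bs Cs hind
  rw [← hHs] at hHsi
  set M := circumcenter3 As Bs Cs hind with hM
  have qA := hρ As (by simp)
  have qB := hρ Bs (by simp)
  have qC := hρ Cs (by simp)
  have eqA0 : As 0 = O 0 + (a1+b1+c1)/2 + (k1*a1+k2*a2) := by linarith
  have eqA1 : As 1 = O 1 + (a2+b2+c2)/2 + (k2*a1-k1*a2) := by linarith
  have eqB0 : Bs 0 = O 0 + (a1+b1+c1)/2 + (k1*b1+k2*b2) := by linarith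
  have eqB1 : Bs 1 = O 1 + (a2+b2+c2)/2 + (k2*b1-k1*b2) := by linarith
  have eqC0 : Cs 0 = O 0 + (a1+b1+c1)/2 + (k1*c1+k2*c2) := by linarith
  have eqC1 : Cs 1 = O 1 + (a2+b2+c2)/2 + (k2*c1-k1*c2) := by linarith
  obtain ⟨M0, M1⟩ := perp_zero (u1 := M 0 - O 0 - (a1+b1+c1)/2)
    (u2 := M 1 - O 1 - (a2+b2+c2)/2) (p1 := Bs 0 - As 0) (p2 := Bs 1 - As 1)
    (q1 := Cs 0 - As 0) (q2 := Cs 1 - As 1)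
    (by
      rw [eqA0, eqA1] at qA ⊢
      rw [eqB0, eqB1] at qB ⊢
      linear_combination (qA - qB) / 2 - (k1^2+k2^2)/2 * (ha - hb))
    (by
      rw [eqA0, eqA1] at qA ⊢
      rw [eqC0, eqC1] at qC ⊢
      linear_combination (qA - qC) / 2 - (k1^2+k2^2)/2 * (ha - hc)) hne'
  have hs0 := hHsi 0
  have hs1 := hHsi 1
  obtain ⟨s, hs, hs'⟩ := pedal_spec Hs Bs Cs
  have hD0 := reflect_spec Bs Cs Hs 0
  have hD1 := reflect_spec Bs Cs Hs 1
  rw [← hD] at hD0 hD1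
  have f0 := hs 0
  have f1 := hs 1
  have hBC : ¬ (Cs 0 - Bs 0 = 0 ∧ Cs 1 - Bs 1 = 0) := by
    rintro ⟨h1, h2⟩
    apply hne'
    rw [show Cs 0 = Bs 0 by linarith, show Cs 1 = Bs 1 by linarith]
    ring
  have n0 : Cs 0 - Bs 0 = (k1*c1+k2*c2) - (k1*b1+k2*b2) := by linarith
  have n1 : Cs 1 - Bs 1 = (k2*c1-k1*c2) - (k2*b1-k1*b2) := by linarith
  rw [n0, n1] at hBC hs'
  rw [n0] at f0
  rw [n1] at f1
  obtain ⟨g1, g2⟩ := refl_alg (d1 := D 0 - O 0 - (a1+b1+c1)/2)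
    (d2 := D 1 - O 1 - (a2+b2+c2)/2) (s := s) hr ha hb hc rfl rfl rfl rfl rfl rfl hBC
    (by linarith) (by linarith)
    (by
      have z0 : D 0 - O 0 - (a1+b1+c1)/2 - (k1*a1+k2*a2 + (k1*b1+k2*b2) + (k1*c1+k2*c2))
        = -2 * (Hs 0 - pedal Hs Bs Cs 0) := by linarith
      have z1 : D 1 - O 1 - (a2+b2+c2)/2 - (k2*a1-k1*a2 + (k2*b1-k1*b2) + (k2*c1-k1*c2))
        = -2 * (Hs 1 - pedal Hs Bs Cs 1) := by linarith
      rw [z0, z1]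
      linear_combination -2 * hs') rfl rfl
  have fin := final_alg hr ha hb hc hk1 hk2 rfl rfl g1 g2
  by_contra hcol
  rw [← affineIndependent_iff_not_collinear_set] at hcol
  apply cross_ne A O D hcol
  linear_combination -fin

end
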